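/- arXiv:2602.07368 — 5 statements merged into one kernel-verified Lean document; each statement's English description precedes it below -/
import Mathlib

section
/- Let C be an abelian category and let σ : X → Y be a morphism between projective objects of C. Then the class D_σ is closed under epimorphic images (quotients), under extensions, and under products (for products that exist in C). -/
open CategoryTheory Limits

universe w v u

/-- For a morphism `σ : X ⟶ Y` in a category `C`, `DClass σ` is the class of objects `L`
such that `Hom_C(σ, L) : Hom_C(Y, L) → Hom_C(X, L)` is surjective. -/
def DClass {C : Type u} [Category.{v} C] {X Y : C} (σ : X ⟶ Y) (L : C) : Prop :=
  Function.Surjective (fun g : Y ⟶ L => σ ≫ g)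

theorem exists_comp_f_eq_of_exact_of_projective {C : Type u} [Category.{v} C] [Preadditive C]
    {S : ShortComplex C} (hS : S.Exact) {P : C} [Projective P] (k : P ⟶ S.X₂)
    (hk : k ≫ S.g = 0) : ∃ l : P ⟶ S.X₁, l ≫ S.f = k := by
  have := hS.hasHomology
  have := hS.epi_toCycles
  refine ⟨Projective.factorThru (S.liftCycles k hk) S.toCycles, ?_⟩
  rw [← S.toCycles_i, Projective.factorThru_comp_assoc, S.liftCycles_i]

namespace DClass

variable {C : Type u} [Category.{v} C] {X Y : C} {σ : X ⟶ Y}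

theorem of_epi [Projective X] {L L' : C} (f : L ⟶ L') [Epi f] (hL : DClass σ L) :
    DClass σ L' := by
  intro h
  obtain ⟨g, hg : σ ≫ g = Projective.factorThru h f⟩ := hL (Projective.factorThru h f)
  refine ⟨g ≫ f, ?_⟩
  calc
    σ ≫ g ≫ f = Projective.factorThru h f ≫ f := by rw [← Category.assoc, hg]
    _ = h := Projective.factorThru_comp h f

theorem of_exact_of_epi [Preadditive C] [Projective X] [Projective Y] {S : ShortComplex C}
    (hS : S.Exact) [Epi S.g] (h₁ : DClass σ S.X₁) (h₃ : DClass σ S.X₃) : DClass σ S.X₂ := by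
  intro h
  obtain ⟨g₃, hg₃ : σ ≫ g₃ = h ≫ S.g⟩ := h₃ (h ≫ S.g)
  let g₂ : Y ⟶ S.X₂ := Projective.factorThru g₃ S.g
  have diff_comp_g : (h - σ ≫ g₂) ≫ S.g = 0 := by
    rw [Preadditive.sub_comp, Category.assoc, Projective.factorThru_comp, hg₃, sub_self]
  obtain ⟨l, hl⟩ := exists_comp_f_eq_of_exact_of_projective hS (h - σ ≫ g₂) diff_comp_g
  obtain ⟨g₁, hg₁ : σ ≫ g₁ = l⟩ := h₁ l
  refine ⟨g₁ ≫ S.f + g₂, ?_⟩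
  calc
    σ ≫ (g₁ ≫ S.f + g₂) = l ≫ S.f + σ ≫ g₂ := by
      rw [Preadditive.comp_add, ← Category.assoc, hg₁]
    _ = h := by rw [hl, sub_add_cancel]

theorem of_isLimit_fan {I : Type w} {f : I → C} {c : Fan f} (hc : IsLimit c)
    (hf : ∀ j, DClass σ (f j)) : DClass σ c.pt := by
  intro h
  choose g hg using fun j => hf j (h ≫ c.proj j)
  refine ⟨Fan.IsLimit.lift hc g, Fan.IsLimit.hom_ext hc _ _ fun j => ?_⟩
  calc
    (σ ≫ Fan.IsLimit.lift hc g) ≫ c.proj j = σ ≫ g j := by rw [Category.assoc, Fan.IsLimit.fac]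
    _ = h ≫ c.proj j := hg j

end DClass

theorem stmt2_general {C : Type u} [Category.{v} C] [Preadditive C] {X Y : C} (σ : X ⟶ Y)
    [Projective X] [Projective Y] :
    (∀ (L L' : C) (f : L ⟶ L'), Epi f → DClass σ L → DClass σ L') ∧
    (∀ (S : ShortComplex C), S.Exact → Epi S.g → DClass σ S.X₁ → DClass σ S.X₃ →
      DClass σ S.X₂) ∧
    (∀ (I : Type w) (f : I → C) (c : Fan f), IsLimit c → (∀ j, DClass σ (f j)) →
      DClass σ c.pt) :=
  ⟨fun _ _ f _ hL => hL.of_epi f,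
    fun _ hS _ h₁ h₃ => DClass.of_exact_of_epi hS h₁ h₃,
    fun _ _ _ hc hf => DClass.of_isLimit_fan hc hf⟩

/-- Let `C` be an abelian category and `σ : X ⟶ Y` a morphism between projective
objects of `C`. Then the class `D_σ` is closed under epimorphic images, under extensions, and
under all products that exist in `C`. -/
theorem stmt2 {C : Type u} [Category.{v} C] [Abelian C] {X Y : C} (σ : X ⟶ Y)
    (hX : Projective X) (hY : Projective Y) :
    (∀ (L L' : C) (f : L ⟶ L'), Epi f → DClass σ L → DClass σ L') ∧
    (∀ (S : ShortComplex C), S.ShortExact → DClass σ S.X₁ → DClass σ S.X₃ → DClass σ S.X₂) ∧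
    (∀ (I : Type w) (f : I → C) (c : Fan f), IsLimit c → (∀ j, DClass σ (f j)) →
      DClass σ c.pt) := by
  obtain ⟨quotients, extensions, products⟩ := stmt2_general σ
  exact ⟨quotients, fun S hS => extensions S hS.exact hS.epi_g, products⟩
end

section
/- Let (B, A, i, e, l) be a cleft extension of abelian categories and let X be an object of B such that the j-th left derived functor of l vanishes on X, i.e. (L_j l)(X) ≅ 0, for all j ≥ 1. Then for all j ≥ 1 and every object Y of A there is an isomorphism Ext^j_A(l(X), Y) ≅ Ext^j_B(X, e(Y)). -/
open CategoryTheory Limits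

universe v u₁ u₂ u

/-- Every abelian category has Ext groups in universe `max u v` (via the standard construction
of its derived category). -/
instance hasExtStandard (C : Type u) [Category.{v} C] [Abelian C] : HasExt.{max u v} C := by
  letI := HasDerivedCategory.standard C
  exact hasExt_of_hasDerivedCategory C

/-!
Since `e` preserves epimorphisms, `l` preserves projectives; being a left adjoint, it is also right
exact. Hence the vanishing of `(L_j l)(X)` for `j ≥ 1` says exactly that `l` maps a projective
resolution `P` of `X` to a projective resolution of `l(X)`. The adjunction identifies the complexes
`Hom(l(P), Y)` and `Hom(P, e(Y))`, whose cohomology groups are the two `Ext` groups.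
-/

universe w w' v' u'

section CocycleClasses

variable {C : Type u} [Category.{v} C] [Abelian C] {X : C}
  (R : ProjectiveResolution X) (Y : C) (n : ℕ)

/-- The `n`-cocycles of the complex `Hom(R, Y)`, for a projective resolution `R`. -/
def extCocycles : AddSubgroup (R.complex.X n ⟶ Y) :=
  (Preadditive.leftComp Y (R.complex.d (n + 1) n)).ker

variable {R Y n} in
lemma mem_extCocycles_iff {f : R.complex.X n ⟶ Y} :
    f ∈ extCocycles R Y n ↔ R.complex.d (n + 1) n ≫ f = 0 :=
  Iff.rfl

variable [HasExt.{w} C]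

/-- The class in `Ext X Y n` of an `n`-cocycle of `Hom(R, Y)`, as an additive map. -/
noncomputable def extCocycleClass : extCocycles R Y n →+ Abelian.Ext X Y n where
  toFun f := R.extMk f.1 (n + 1) rfl f.2
  map_zero' := R.extMk_zero _ _
  map_add' f g := (R.add_extMk f.1 g.1 (n + 1) rfl f.2 g.2).symm

lemma extCocycleClass_surjective : Function.Surjective (extCocycleClass R Y n) := fun α ↦ by
  obtain ⟨f, hf, rfl⟩ := R.extMk_surjective α (n + 1) rfl
  exact ⟨⟨f, hf⟩, rfl⟩

variable {R Y n} in
lemma extCocycleClass_succ_eq_zero_iff (f : extCocycles R Y (n + 1)) :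
    extCocycleClass R Y (n + 1) f = 0 ↔
      ∃ g : R.complex.X n ⟶ Y, R.complex.d (n + 1) n ≫ g = f :=
  R.extMk_eq_zero_iff f.1 (n + 1 + 1) rfl f.2 n rfl

end CocycleClasses

section Comparison

variable {C : Type u} [Category.{v} C] [Abelian C] {D : Type u'} [Category.{v'} D] [Abelian D]
  {X Y : C} {X' Y' : D} {R : ProjectiveResolution X} {R' : ProjectiveResolution X'}
  (φ : ∀ n, (R.complex.X n ⟶ Y) ≃+ (R'.complex.X n ⟶ Y'))

lemma map_extCocycles (n : ℕ)
    (hφ : ∀ f, φ (n + 1) (R.complex.d (n + 1) n ≫ f) = R'.complex.d (n + 1) n ≫ φ n f) :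
    (extCocycles R Y n).map (φ n).toAddMonoidHom = extCocycles R' Y' n := by
  ext f
  obtain ⟨f, rfl⟩ := (φ n).surjective f
  simp [mem_extCocycles_iff, ← hφ]

variable (hφ : ∀ n f, φ (n + 1) (R.complex.d (n + 1) n ≫ f) = R'.complex.d (n + 1) n ≫ φ n f)

/-- The isomorphism on `n`-cocycles induced by an isomorphism of complexes
`Hom(R, Y) ≅ Hom(R', Y')`. -/
noncomputable def extCocyclesAddEquiv (n : ℕ) : extCocycles R Y n ≃+ extCocycles R' Y' n :=
  ((φ n).addSubgroupMap _).trans (AddEquiv.addSubgroupCongr (map_extCocycles φ n (hφ n)))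

lemma coe_extCocyclesAddEquiv (n : ℕ) (f : extCocycles R Y n) :
    (extCocyclesAddEquiv φ hφ n f : R'.complex.X n ⟶ Y') = φ n f :=
  rfl

variable [HasExt.{w} C] [HasExt.{w'} D]

lemma extCocycleClass_extCocyclesAddEquiv_succ_eq_zero_iff (n : ℕ)
    (f : extCocycles R Y (n + 1)) :
    extCocycleClass R' Y' (n + 1) (extCocyclesAddEquiv φ hφ (n + 1) f) = 0 ↔
      extCocycleClass R Y (n + 1) f = 0 := by
  simp only [extCocycleClass_succ_eq_zero_iff, coe_extCocyclesAddEquiv, (φ n).surjective.exists,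
    ← hφ, EmbeddingLike.apply_eq_iff_eq]

lemma map_ker_extCocycleClass_succ (n : ℕ) :
    (extCocycleClass R Y (n + 1)).ker.map (extCocyclesAddEquiv φ hφ (n + 1) : _ →+ _) =
      (extCocycleClass R' Y' (n + 1)).ker := by
  ext f
  obtain ⟨f, rfl⟩ := (extCocyclesAddEquiv φ hφ (n + 1)).surjective f
  simp [extCocycleClass_extCocyclesAddEquiv_succ_eq_zero_iff]

/-- The isomorphism on `Ext` in positive degrees induced by an isomorphism of complexes
`Hom(R, Y) ≅ Hom(R', Y')`. -/
noncomputable def extSuccAddEquivOfHomAddEquiv (n : ℕ) :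
    Abelian.Ext X Y (n + 1) ≃+ Abelian.Ext X' Y' (n + 1) :=
  (QuotientAddGroup.quotientKerEquivOfSurjective _ (extCocycleClass_surjective R Y _)).symm.trans <|
    (QuotientAddGroup.congr _ _ _ (map_ker_extCocycleClass_succ φ hφ n)).trans <|
      QuotientAddGroup.quotientKerEquivOfSurjective _ (extCocycleClass_surjective R' Y' _)

end Comparison

section MapResolution

variable {C : Type u} [Category.{v} C] [Abelian C] {D : Type u'} [Category.{v'} D] [Abelian D]
  (F : C ⥤ D) [F.Additive] {X : C} (P : ProjectiveResolution X)

/-- The augmentation `F(P) ⟶ F(X)` of the image under `F` of a projective resolution `P` of `X`. -/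
noncomputable def mapAugmentation :
    (F.mapHomologicalComplex _).obj P.complex ⟶ (ChainComplex.single₀ D).obj (F.obj X) :=
  (F.mapHomologicalComplex _).map P.π ≫
    (HomologicalComplex.singleMapHomologicalComplex _ _ _).hom.app _

lemma mapAugmentation_f_zero : (mapAugmentation F P).f 0 = F.map (P.π.f 0) := by
  simp only [ChainComplex.single₀_obj_zero, mapAugmentation, HomologicalComplex.comp_f,
    Functor.mapHomologicalComplex_map_f,
    HomologicalComplex.singleMapHomologicalComplex_hom_app_self, ChainComplex.single₀ObjXSelf,
    Iso.refl_hom, Iso.refl_inv, CategoryTheory.Functor.map_id, Category.comp_id]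
  exact Category.comp_id _

lemma opcyclesMap_mapAugmentation :
    HomologicalComplex.opcyclesMap (mapAugmentation F P) 0 ≫
      (HomologicalComplex.singleObjOpcyclesSelfIso _ 0 _).inv = P.fromLeftDerivedZero' F := by
  rw [← cancel_epi (HomologicalComplex.pOpcycles _ _), P.pOpcycles_comp_fromLeftDerivedZero',
    HomologicalComplex.p_opcyclesMap_assoc, mapAugmentation_f_zero,
    HomologicalComplex.pOpcycles_singleObjOpcyclesSelfIso_inv]
  exact Category.comp_id _

lemma quasiIsoAt_mapAugmentation_zero [PreservesFiniteColimits F] :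
    QuasiIsoAt (mapAugmentation F P) 0 := by
  have : IsIso (HomologicalComplex.opcyclesMap (mapAugmentation F P) 0) :=
    IsIso.of_isIso_fac_right (opcyclesMap_mapAugmentation F P)
  rw [quasiIsoAt_iff_isIso_homologyMap]
  exact IsIso.of_isIso_fac_left (ChainComplex.isoHomologyι₀_inv_naturality (mapAugmentation F P))

lemma quasiIso_mapAugmentation [PreservesFiniteColimits F]
    (hP : ∀ n, ((F.mapHomologicalComplex _).obj P.complex).ExactAt (n + 1)) :
    QuasiIso (mapAugmentation F P) where
  quasiIsoAt
    | 0 => quasiIsoAt_mapAugmentation_zero F P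
    | n + 1 => (quasiIsoAt_iff_exactAt' _ _ (ChainComplex.exactAt_succ_single_obj _ _)).2 (hP n)

variable {P} in
lemma exactAt_succ_of_isZero_leftDerived [EnoughProjectives C] {n : ℕ}
    (hX : IsZero ((F.leftDerived (n + 1)).obj X)) :
    ((F.mapHomologicalComplex _).obj P.complex).ExactAt (n + 1) :=
  (HomologicalComplex.exactAt_iff_isZero_homology _ _).2
    (hX.of_iso (P.isoLeftDerivedObj F (n + 1)).symm)

/-- The image of a projective resolution under a right exact functor that preserves projective
objects and keeps the resolution exact in positive degrees. -/
noncomputable def mapProjectiveResolutionOfExactAt [PreservesFiniteColimits F]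
    [F.PreservesProjectiveObjects]
    (hP : ∀ n, ((F.mapHomologicalComplex _).obj P.complex).ExactAt (n + 1)) :
    ProjectiveResolution (F.obj X) where
  complex := (F.mapHomologicalComplex _).obj P.complex
  projective n := F.projective_obj (P.complex.X n)
  π := mapAugmentation F P
  quasiIso := quasiIso_mapAugmentation F P hP

end MapResolution

theorem stmt9_general {A : Type u} {B : Type u'} [Category.{v} A] [Category.{v'} B]
    [Abelian A] [Abelian B] [HasExt.{w} A] [HasExt.{w'} B] [EnoughProjectives B]
    {e : A ⥤ B} {l : B ⥤ A} [e.PreservesEpimorphisms] [l.Additive] (adj : l ⊣ e)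
    (X : B) (hX : ∀ j : ℕ, 1 ≤ j → IsZero ((l.leftDerived j).obj X)) (j : ℕ) (Y : A) :
    Nonempty (Abelian.Ext (l.obj X) Y j ≃+ Abelian.Ext X (e.obj Y) j) := by
  have : PreservesFiniteColimits l :=
    adj.leftAdjoint_preservesColimits.{0, 0}.preservesFiniteColimits
  have : l.PreservesProjectiveObjects :=
    Functor.preservesProjectiveObjects_of_adjunction_of_preservesEpimorphisms adj
  let P := projectiveResolution X
  let Q := mapProjectiveResolutionOfExactAt l P
    fun n ↦ exactAt_succ_of_isZero_leftDerived l (hX (n + 1) (Nat.le_add_left 1 n))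
  cases j with
  | zero => exact ⟨Abelian.Ext.addEquiv₀.trans
      ((adj.homAddEquiv X Y).trans Abelian.Ext.addEquiv₀.symm)⟩
  | succ n => exact ⟨extSuccAddEquivOfHomAddEquiv (R := Q) (R' := P)
      (φ := fun m ↦ adj.homAddEquiv (P.complex.X m) Y)
      (hφ := fun _ _ ↦ adj.homEquiv_naturality_left _ _) n⟩

/-- Let `(B, A, i, e, l)` be a cleft extension of abelian categories and `X` an
object of `B` such that `(L_j l)(X) ≅ 0` for all `j ≥ 1`. Then for all `j ≥ 1` and every object
`Y` of `A` there is an isomorphism `Ext^j_A(l(X), Y) ≅ Ext^j_B(X, e(Y))`. -/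
theorem stmt9 {A : Type u₁} {B : Type u₂} [Category.{v} A] [Category.{v} B]
    [Abelian A] [Abelian B] [EnoughProjectives A] [EnoughProjectives B]
    (i : B ⥤ A) (e : A ⥤ B) (l : B ⥤ A) [e.Faithful]
    [PreservesFiniteLimits e] [PreservesFiniteColimits e] [l.Additive]
    (adj : l ⊣ e) (η : i ⋙ e ≅ 𝟭 B)
    (X : B) (hX : ∀ j : ℕ, 1 ≤ j → IsZero ((l.leftDerived j).obj X)) :
    ∀ (j : ℕ), 1 ≤ j → ∀ (Y : A),
      Nonempty (Abelian.Ext (l.obj X) Y j ≃+ Abelian.Ext X (e.obj Y) j) := by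
  intro j _ Y
  exact stmt9_general adj X hX j Y
end

section
/- Let (B, A, i, e, l) be a cleft extension of abelian categories and let X be an object of B such that (L_t l)(X) ≅ 0 for all 1 ≤ t ≤ n+1 (L_t l the t-th left derived functor of l). Set F(X) := e(ker(μ_{i(X)})), where μ is the counit of (l, e). Then l(X) is a partial n-tilting object of A if and only if X is a partial n-tilting object of B and Ext^j_B(X, F(X)) = 0 for all 1 ≤ j ≤ n. -/
open CategoryTheory Limits

universe v u₁ u₂ u

/-- An object `X` of an abelian category has projective dimension at most `n` if there is an
exact sequence `0 ⟶ Pₙ ⟶ ⋯ ⟶ P₀ ⟶ X ⟶ 0` with each `Pₖ` projective. -/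
def HasProjDimLE {C : Type u} [Category.{v} C] [Abelian C] (X : C) (n : ℕ) : Prop :=
  ∃ (S : ComposableArrows C (n + 1)),
    S.Exact ∧ Mono (S.map' 0 1) ∧ Epi (S.map' n (n + 1)) ∧
    (∀ (k : ℕ) (hk : k ≤ n), Projective (S.obj' k (by omega))) ∧
    Nonempty (S.obj' (n + 1) ≅ X)

/-- An object `X` of an abelian category is partial `n`-tilting if it has projective dimension
at most `n` and `Ext^j(X, X) = 0` for all `j ≥ 1`. -/
def IsPartialNTilting {C : Type u} [Category.{v} C] [Abelian C] (X : C) (n : ℕ) : Prop :=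
  HasProjDimLE X n ∧ ∀ j : ℕ, 1 ≤ j → Subsingleton (Abelian.Ext X X j)

/-!
Let `Kₙ = coker (Pₙ₊₁ ⟶ Pₙ)` be the syzygies of a projective resolution `P` of `X`. The functor `l`
is right exact and preserves projectives, so the vanishing of the `L_t l (X)` makes the `l(Kₙ)`
syzygies of `l(X)`. Dimension shifting turns `Extⁿ⁺¹(l(X), Y)` into `Ext¹(l(Kₙ), Y)`, whose
vanishing says that every map `l(Kₙ₊₁) ⟶ Y` extends along `l(Kₙ₊₁) ⟶ l(Pₙ)`; by adjunction this is
the vanishing of `Extⁿ⁺¹(X, e(Y))`. Every object of `B` being of the form `e(Y)`, this compares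
projective dimensions, and `e(l(X)) ≅ F(X) ⊞ X` compares the self-extensions.
-/

universe w w' v₁ v₂

open Abelian

section Ext

variable {C : Type u} [Category.{v} C] [Abelian C] [HasExt.{w} C]

lemma subsingleton_ext_congr (X : C) {Y Z : C} (φ : Y ≅ Z) (j : ℕ) :
    Subsingleton (Ext X Y j) ↔ Subsingleton (Ext X Z j) :=
  ((extFunctorObj X j).mapIso φ).addCommGroupIsoToAddEquiv.toEquiv.subsingleton_congr

lemma subsingleton_ext_biprod_iff (X Y Z : C) (j : ℕ) :
    Subsingleton (Ext X (Y ⊞ Z) j) ↔ Subsingleton (Ext X Y j) ∧ Subsingleton (Ext X Z j) := by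
  rw [Ext.addEquivBiprod.toEquiv.subsingleton_congr]
  exact ⟨fun _ ↦ ⟨(Prod.fst_surjective (β := Ext X Z j)).subsingleton,
    (Prod.snd_surjective (α := Ext X Y j)).subsingleton⟩, fun ⟨_, _⟩ ↦ inferInstance⟩

variable {S : ShortComplex C} [Projective S.X₂]

lemma subsingleton_ext_succ_iff_of_shortExact (hS : S.ShortExact) (Y : C) {j : ℕ} (hj : 1 ≤ j) :
    Subsingleton (Ext S.X₃ Y (j + 1)) ↔ Subsingleton (Ext S.X₁ Y j) := by
  constructor
  · refine fun _ ↦ subsingleton_of_forall_eq 0 fun x ↦ ?_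
    obtain ⟨y, rfl⟩ := Ext.contravariant_sequence_exact₁ hS Y x (add_comm 1 j)
      (Subsingleton.elim _ _)
    rw [y.eq_zero_of_hasProjectiveDimensionLT 1 hj, Ext.comp_zero]
  · refine fun _ ↦ subsingleton_of_forall_eq 0 fun x ↦ ?_
    obtain ⟨y, rfl⟩ := Ext.contravariant_sequence_exact₃ hS Y x
      (Ext.eq_zero_of_hasProjectiveDimensionLT _ 1 (by omega)) (add_comm 1 j)
    rw [Subsingleton.elim y 0, Ext.comp_zero]

lemma subsingleton_ext_one_iff_of_shortExact (hS : S.ShortExact) (Y : C) :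
    Subsingleton (Ext S.X₃ Y 1) ↔ ∀ f : S.X₁ ⟶ Y, ∃ g : S.X₂ ⟶ Y, S.f ≫ g = f := by
  constructor
  · intro _ f
    obtain ⟨y, hy⟩ := Ext.contravariant_sequence_exact₁ hS Y (Ext.mk₀ f) (add_zero 1)
      (Subsingleton.elim _ _)
    obtain ⟨g, rfl⟩ := (Ext.mk₀_bijective _ _).2 y
    rw [Ext.mk₀_comp_mk₀] at hy
    exact ⟨g, (Ext.mk₀_bijective _ _).1 hy⟩
  · refine fun extend ↦ subsingleton_of_forall_eq 0 fun x ↦ ?_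
    obtain ⟨y, rfl⟩ := Ext.contravariant_sequence_exact₃ hS Y x
      (Ext.eq_zero_of_hasProjectiveDimensionLT _ 1 (by omega)) (add_zero 1)
    obtain ⟨f, rfl⟩ := (Ext.mk₀_bijective _ _).2 y
    obtain ⟨g, rfl⟩ := extend f
    rw [← Ext.mk₀_comp_mk₀, hS.extClass_comp_assoc]

end Ext

section Exact

variable {C : Type u} [Category.{v} C] [Abelian C] {X Y Z T : C}

lemma exact_comp_mono_iff {f : X ⟶ Y} {g : Y ⟶ Z} {m : Z ⟶ T} {h : Y ⟶ T} [Mono m]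
    (w : f ≫ g = 0) (fac : g ≫ m = h) (w' : f ≫ h = 0) :
    (ShortComplex.mk f h w').Exact ↔ (ShortComplex.mk f g w).Exact := by
  let φ : ShortComplex.mk f g w ⟶ ShortComplex.mk f h w' := { τ₁ := 𝟙 _, τ₂ := 𝟙 _, τ₃ := m }
  exact (ShortComplex.exact_iff_of_epi_of_isIso_of_mono φ).symm

lemma exact_epi_comp_iff {p : X ⟶ Y} {f : Y ⟶ Z} {g : Z ⟶ T} {h : X ⟶ Z} [Epi p]
    (w : f ≫ g = 0) (fac : p ≫ f = h) (w' : h ≫ g = 0) :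
    (ShortComplex.mk h g w').Exact ↔ (ShortComplex.mk f g w).Exact := by
  let φ : ShortComplex.mk h g w' ⟶ ShortComplex.mk f g w := { τ₁ := p, τ₂ := 𝟙 _, τ₃ := 𝟙 _ }
  exact ShortComplex.exact_iff_of_epi_of_isIso_of_mono φ

end Exact

section ProjectiveDimension

variable {C : Type u} [Category.{v} C] [Abelian C]

lemma shortExact_image_of_exact {S : ShortComplex C} (hS : S.Exact) :
    (ShortComplex.mk (Abelian.image.ι S.f) (Abelian.factorThruImage S.g)
      (by simp [← cancel_mono (Abelian.image.ι S.g),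
        ← cancel_epi (Abelian.factorThruImage S.f)])).ShortExact where
  exact := (exact_comp_mono_iff _ (Abelian.image.fac S.g) _).1 (S.exact_iff_exact_image_ι.1 hS)

lemma hasProjectiveDimensionLT_image {n : ℕ} {S : ComposableArrows C (n + 1)} (hS : S.Exact)
    (hmono : Mono (S.map' 0 1)) (hP : ∀ (k : ℕ) (_ : k ≤ n), Projective (S.obj' k))
    (k : ℕ) (hk : k ≤ n) :
    HasProjectiveDimensionLT (Abelian.image (S.map' k (k + 1))) (k + 1) := by
  induction k with
  | zero =>
    have := hP 0 hk
    exact hasProjectiveDimensionLT_of_iso (asIso (Abelian.factorThruImage (S.map' 0 1))) 1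
  | succ k ih =>
    exact ((shortExact_image_of_exact (hS.exact k)).hasProjectiveDimensionLT_X₃_iff k
      (hP (k + 1) hk)).2 (ih (by omega))

lemma HasProjDimLE.hasProjectiveDimensionLT {X : C} {n : ℕ} (h : HasProjDimLE X n) :
    HasProjectiveDimensionLT X (n + 1) := by
  obtain ⟨S, hS, hmono, _, hP, ⟨φ⟩⟩ := h
  have := hasProjectiveDimensionLT_image hS hmono hP n le_rfl
  let ψ : Abelian.image (S.map' n (n + 1)) ≅ S.obj' (n + 1) := asIso (Abelian.image.ι _)
  exact hasProjectiveDimensionLT_of_iso (ψ ≪≫ φ) (n + 1)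

lemma HasProjDimLE.subsingleton_ext [HasExt.{w} C] {X : C} {n : ℕ} (h : HasProjDimLE X n) (Y : C)
    {j : ℕ} (hj : n < j) : Subsingleton (Ext X Y j) :=
  have := h.hasProjectiveDimensionLT
  HasProjectiveDimensionLT.subsingleton X (n + 1) j hj Y

lemma isPartialNTilting_iff {X : C} {n : ℕ} :
    IsPartialNTilting X n ↔
      HasProjDimLE X n ∧ ∀ j : ℕ, 1 ≤ j → j ≤ n → Subsingleton (Ext X X j) :=
  and_congr_right fun h ↦ forall₂_congr fun j _ ↦
    ⟨fun hj _ ↦ hj, fun hj ↦ (le_or_gt j n).elim hj (h.subsingleton_ext X)⟩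

end ProjectiveDimension

section Syzygy

variable {C : Type u} [Category.{v} C] [Abelian C]

/-- `IsSyzygy X n K` says that `K` is an `n`-th syzygy of `X`: there is an exact sequence
`0 ⟶ K ⟶ Pₙ₋₁ ⟶ ⋯ ⟶ P₀ ⟶ X ⟶ 0` with each `Pₖ` projective, here cut into short exact
sequences. -/
inductive IsSyzygy (X : C) : ℕ → C → Prop
  | of_iso {K : C} (φ : K ≅ X) : IsSyzygy X 0 K
  | of_shortExact {n : ℕ} {S : ShortComplex C} (hS : S.ShortExact) (hP : Projective S.X₂)
      (h : IsSyzygy X n S.X₃) : IsSyzygy X (n + 1) S.X₁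

lemma exact_precomp_epi_comp {n : ℕ} {F : ComposableArrows C n} {K P : C} {f : K ⟶ F.left}
    (hF : (F.precomp f).Exact) (p : P ⟶ K) [Epi p] : (F.precomp (p ≫ f)).Exact := by
  obtain _ | n := n
  · exact ComposableArrows.exact₁ _
  · have w : f ≫ F.map' 0 1 = 0 := hF.toIsComplex.zero 0
    have w' : (p ≫ f) ≫ F.map' 0 1 = 0 := by rw [Category.assoc, w, comp_zero]
    exact ComposableArrows.exact_of_δ₀
      ((exact_epi_comp_iff w rfl w').2 (hF.exact 0)).exact_toComposableArrows hF.δ₀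

namespace IsSyzygy

lemma subsingleton_ext_iff [HasExt.{w} C] {X K : C} {n : ℕ} (h : IsSyzygy X n K) (Y : C) {j : ℕ}
    (hj : 1 ≤ j) : Subsingleton (Ext X Y (n + j)) ↔ Subsingleton (Ext K Y j) := by
  induction h generalizing j with
  | @of_iso K φ =>
    rw [zero_add]
    exact ((extFunctor j).mapIso φ.op |>.app Y).addCommGroupIsoToAddEquiv.toEquiv.subsingleton_congr
  | of_shortExact hS hP _ ih =>
    rw [Nat.succ_add_eq_add_succ, ih (by omega), subsingleton_ext_succ_iff_of_shortExact hS Y hj]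

lemma exists_composableArrows {X K : C} {n : ℕ} (h : IsSyzygy X n K) :
    ∃ (F : ComposableArrows C n) (f : K ⟶ F.left),
      (F.precomp f).Exact ∧ Mono f ∧ Epi ((F.precomp f).map' n (n + 1)) ∧
        (∀ (k : ℕ) (_ : k < n), Projective (F.obj' k)) ∧ Nonempty (F.right ≅ X) := by
  induction h with
  | @of_iso K φ =>
    exact ⟨.mk₀ X, φ.hom, ComposableArrows.exact₁ _, inferInstanceAs (Mono φ.hom),
      inferInstanceAs (Epi φ.hom), fun k hk ↦ by omega, ⟨Iso.refl _⟩⟩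
  | @of_shortExact n S hS hP _ ih =>
    obtain ⟨F, f, hF, _, hepi, hproj, hX⟩ := ih
    have := hS.epi_g
    refine ⟨F.precomp (S.g ≫ f), S.f, ?_, hS.mono_f, ?_, ?_, hX⟩
    · exact ComposableArrows.exact_of_δ₀
        ((exact_comp_mono_iff S.zero rfl (by simp)).2 hS.exact).exact_toComposableArrows
        (exact_precomp_epi_comp hF S.g)
    · obtain _ | n := n
      · have : Epi f := hepi
        exact epi_comp S.g f
      · exact hepi
    · rintro (_ | k) hk
      · exact hP
      · exact hproj k (by omega)

lemma hasProjDimLE {X K : C} {n : ℕ} (h : IsSyzygy X n K) (hK : Projective K) :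
    HasProjDimLE X n := by
  obtain ⟨F, f, hF, hmono, hepi, hproj, hX⟩ := h.exists_composableArrows
  refine ⟨F.precomp f, hF, hmono, hepi, ?_, hX⟩
  rintro (_ | k) hk
  · exact hK
  · exact hproj k hk

lemma projective_iff [HasExt.{w} C] {X K : C} {n : ℕ} (h : IsSyzygy X n K) :
    Projective K ↔ ∀ Y : C, Subsingleton (Ext X Y (n + 1)) := by
  simp only [projective_iff_subsingleton_ext_one, h.subsingleton_ext_iff _ le_rfl]

end IsSyzygy

end Syzygy

section CokernelSequence

variable {C : Type u₁} {D : Type u₂} [Category.{v₁} C] [Category.{v₂} D] [Abelian C] [Abelian D]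

/-- The complex `coker f ⟶ Z ⟶ coker g` attached to a complex `X ⟶ Y ⟶ Z` with maps `f` and `g`.
Applied to consecutive differentials of a projective resolution it relates two consecutive
syzygies. -/
noncomputable def cokernelSequence (S : ShortComplex C) : ShortComplex C :=
  .mk (cokernel.desc S.f S.g S.zero) (cokernel.π S.g) (by simp [← cancel_epi (cokernel.π S.f)])

lemma cokernelSequence_shortExact {S : ShortComplex C} (hS : S.Exact) :
    (cokernelSequence S).ShortExact where
  exact := (exact_epi_comp_iff _ (cokernel.π_desc S.f S.g S.zero) (cokernel.condition S.g)).1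
    (ShortComplex.exact_cokernel S.g)
  mono_f := S.exact_iff_mono_cokernel_desc.1 hS
  epi_g := inferInstanceAs (Epi (cokernel.π S.g))

/-- `cokernelSequence` commutes with right exact functors. -/
noncomputable def cokernelSequenceMapIso (F : C ⥤ D) [F.PreservesZeroMorphisms]
    [PreservesFiniteColimits F] (S : ShortComplex C) :
    cokernelSequence (S.map F) ≅ (cokernelSequence S).map F :=
  ShortComplex.isoMk (PreservesCokernel.iso F S.f).symm (Iso.refl _)
    (PreservesCokernel.iso F S.g).symm
    (by
      rw [Iso.symm_hom, PreservesCokernel.iso_inv]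
      exact (cokernelComparison_map_desc S.f F S.zero).trans (Category.comp_id _).symm)
    (by
      rw [Iso.symm_hom, PreservesCokernel.iso_inv]
      exact (Category.id_comp _).trans (π_comp_cokernelComparison S.g F).symm)

lemma cokernelSequence_map_shortExact (F : C ⥤ D) [F.PreservesZeroMorphisms]
    [PreservesFiniteColimits F] {S : ShortComplex C} (hS : (S.map F).Exact) :
    ((cokernelSequence S).map F).ShortExact :=
  ShortComplex.shortExact_of_iso (cokernelSequenceMapIso F S) (cokernelSequence_shortExact hS)

end CokernelSequence

section ProjectiveResolution

variable {C : Type u₁} {D : Type u₂} [Category.{v₁} C] [Category.{v₂} D] [Abelian C] [Abelian D]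
  {X : C}

/-- The sequence `Ωⁿ⁺¹X ⟶ Pₙ ⟶ ΩⁿX`, where `ΩⁿX` is the cokernel of `Pₙ₊₁ ⟶ Pₙ`. -/
noncomputable abbrev syzygySequence (P : ProjectiveResolution X) (n : ℕ) : ShortComplex C :=
  cokernelSequence (P.complex.sc' (n + 2) (n + 1) n)

lemma syzygySequence_shortExact (P : ProjectiveResolution X) (n : ℕ) :
    (syzygySequence P n).ShortExact :=
  cokernelSequence_shortExact (P.exact_succ n)

/-- The zeroth syzygy `Ω⁰X` of a projective resolution is `X` itself. -/
noncomputable def cokernelIsoOfProjectiveResolution (P : ProjectiveResolution X) :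
    cokernel (P.complex.d 1 0) ≅ X :=
  (cokernelIsCokernel _).coconePointUniqueUpToIso P.isColimitCokernelCofork

lemma isSyzygy_cokernel (P : ProjectiveResolution X) (n : ℕ) :
    IsSyzygy X n (cokernel (P.complex.d (n + 1) n)) := by
  induction n with
  | zero => exact .of_iso (cokernelIsoOfProjectiveResolution P)
  | succ n ih => exact .of_shortExact (syzygySequence_shortExact P n) (P.projective n) ih

variable (F : C ⥤ D) [F.Additive] [PreservesFiniteColimits F] [HasProjectiveResolutions C]

lemma syzygySequence_map_shortExact (P : ProjectiveResolution X) {n : ℕ}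
    (hn : IsZero ((F.leftDerived (n + 1)).obj X)) : ((syzygySequence P n).map F).ShortExact := by
  let FP := (F.mapHomologicalComplex (.down ℕ)).obj P.complex
  have hFP : FP.ExactAt (n + 1) := by
    rw [HomologicalComplex.exactAt_iff_isZero_homology]
    exact hn.of_iso (P.isoLeftDerivedObj F (n + 1)).symm
  exact cokernelSequence_map_shortExact F
    ((FP.exactAt_iff' (n + 2) (n + 1) n (by simp) (by simp)).1 hFP)

lemma isSyzygy_map_cokernel [F.PreservesProjectiveObjects] (P : ProjectiveResolution X) (n : ℕ)
    (hX : ∀ t, 1 ≤ t → t ≤ n → IsZero ((F.leftDerived t).obj X)) :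
    IsSyzygy (F.obj X) n (F.obj (cokernel (P.complex.d (n + 1) n))) := by
  induction n with
  | zero => exact .of_iso (F.mapIso (cokernelIsoOfProjectiveResolution P))
  | succ n ih =>
    exact .of_shortExact
      (syzygySequence_map_shortExact F P (hX (n + 1) (by omega) le_rfl))
      (F.projective_obj (P.complex.X n)) (ih fun t ht htn ↦ hX t ht (by omega))

end ProjectiveResolution

section Adjunction

variable {A : Type u₁} {B : Type u₂} [Category.{v₁} A] [Category.{v₂} B]
  {e : A ⥤ B} {l : B ⥤ A}

lemma forall_exists_map_comp_eq_iff (adj : l ⊣ e) {K P : B} (k : K ⟶ P) (Y : A) :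
    (∀ f : l.obj K ⟶ Y, ∃ g : l.obj P ⟶ Y, l.map k ≫ g = f) ↔
      ∀ f : K ⟶ e.obj Y, ∃ g : P ⟶ e.obj Y, k ≫ g = f := by
  simp only [(adj.homEquiv _ _).forall_congr_left, (adj.homEquiv _ _).exists_congr_left,
    ← adj.homEquiv_naturality_left_symm, EmbeddingLike.apply_eq_iff_eq]

variable [Abelian A] [Abelian B]

/-- The counit splits after applying `e`, its section being the unit at `e(Z)`. -/
lemma nonempty_iso_biprod_kernel_counit (adj : l ⊣ e) (Z : A) :
    Nonempty (e.obj (l.obj (e.obj Z)) ≅ e.obj (kernel (adj.counit.app Z)) ⊞ e.obj Z) := by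
  have : PreservesFiniteLimits e := have := adj.rightAdjoint_preservesLimits; inferInstance
  have : e.Additive := Functor.additive_of_preserves_binary_products e
  let S := ShortComplex.mk (kernel.ι (adj.counit.app Z)) (adj.counit.app Z) (by simp)
  have hS : (S.map e).Exact :=
    (ShortComplex.exact_kernel _).map_of_mono_of_preservesKernel e inferInstance inferInstance
  exact ⟨(ShortComplex.Splitting.ofExactOfSection (S.map e) hS (adj.unit.app (e.obj Z))
    (adj.right_triangle_components Z) (inferInstanceAs (Mono (e.map _)))).isoBinaryBiproduct⟩

lemma subsingleton_ext_obj_leftAdjoint_iff [HasExt.{w'} B] (adj : l ⊣ e) {Z : A} {Y : B}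
    (φ : e.obj Z ≅ Y) (X : B) (j : ℕ) :
    Subsingleton (Ext X (e.obj (l.obj Y)) j) ↔
      Subsingleton (Ext X Y j) ∧ Subsingleton (Ext X (e.obj (kernel (adj.counit.app Z))) j) := by
  obtain ⟨ψ⟩ := nonempty_iso_biprod_kernel_counit adj Z
  rw [← subsingleton_ext_congr X (e.mapIso (l.mapIso φ)), subsingleton_ext_congr X ψ,
    subsingleton_ext_biprod_iff, subsingleton_ext_congr X φ, and_comm]

variable [EnoughProjectives B] [l.Additive] [e.PreservesEpimorphisms]

lemma subsingleton_ext_leftAdjoint_iff [HasExt.{w} A] [HasExt.{w'} B] (adj : l ⊣ e) {X : B} {n : ℕ}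
    (hX : ∀ t, 1 ≤ t → t ≤ n + 1 → IsZero ((l.leftDerived t).obj X)) (Y : A) :
    Subsingleton (Ext (l.obj X) Y (n + 1)) ↔ Subsingleton (Ext X (e.obj Y) (n + 1)) := by
  have : PreservesFiniteColimits l := have := adj.leftAdjoint_preservesColimits; inferInstance
  have : l.PreservesProjectiveObjects := ⟨fun h ↦ adj.map_projective _ h⟩
  let P := ProjectiveResolution.of X
  have : Projective (syzygySequence P n).X₂ := P.projective n
  have : Projective ((syzygySequence P n).map l).X₂ := l.projective_obj (P.complex.X n)
  calc
    _ ↔ Subsingleton (Ext (l.obj (syzygySequence P n).X₃) Y 1) :=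
      (isSyzygy_map_cokernel l P n fun t ht htn ↦ hX t ht (by omega)).subsingleton_ext_iff Y le_rfl
    _ ↔ ∀ f : l.obj (syzygySequence P n).X₁ ⟶ Y, ∃ g, l.map (syzygySequence P n).f ≫ g = f :=
      subsingleton_ext_one_iff_of_shortExact
        (syzygySequence_map_shortExact l P (hX (n + 1) (by omega) le_rfl)) Y
    _ ↔ ∀ f : (syzygySequence P n).X₁ ⟶ e.obj Y, ∃ g, (syzygySequence P n).f ≫ g = f :=
      forall_exists_map_comp_eq_iff adj _ Y
    _ ↔ Subsingleton (Ext (syzygySequence P n).X₃ (e.obj Y) 1) :=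
      (subsingleton_ext_one_iff_of_shortExact (syzygySequence_shortExact P n) _).symm
    _ ↔ _ := ((isSyzygy_cokernel P n).subsingleton_ext_iff _ le_rfl).symm

lemma hasProjDimLE_leftAdjoint_iff [e.EssSurj] (adj : l ⊣ e) {X : B} {n : ℕ}
    (hX : ∀ t, 1 ≤ t → t ≤ n + 1 → IsZero ((l.leftDerived t).obj X)) :
    HasProjDimLE (l.obj X) n ↔ HasProjDimLE X n := by
  have : PreservesFiniteColimits l := have := adj.leftAdjoint_preservesColimits; inferInstance
  have : l.PreservesProjectiveObjects := ⟨fun h ↦ adj.map_projective _ h⟩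
  let P := ProjectiveResolution.of X
  have hK := isSyzygy_cokernel P n
  have hlK := isSyzygy_map_cokernel l P n fun t ht htn ↦ hX t ht (by omega)
  constructor
  · refine fun h ↦ hK.hasProjDimLE (hK.projective_iff.2 fun Y ↦ ?_)
    rw [subsingleton_ext_congr X (e.objObjPreimageIso Y).symm,
      ← subsingleton_ext_leftAdjoint_iff adj hX]
    exact h.subsingleton_ext _ n.lt_succ_self
  · intro h
    have hproj := hK.projective_iff.2 fun Y ↦ h.subsingleton_ext Y n.lt_succ_self
    exact hlK.hasProjDimLE (adj.map_projective _ hproj)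

end Adjunction

theorem stmt10_general {A : Type u₁} {B : Type u₂} [Category.{v₁} A] [Category.{v₂} B]
    [Abelian A] [Abelian B] [EnoughProjectives B]
    (i : B ⥤ A) (e : A ⥤ B) (l : B ⥤ A)
    [e.PreservesEpimorphisms] [l.Additive]
    (adj : l ⊣ e) (η : i ⋙ e ≅ 𝟭 B)
    (X : B) (n : ℕ)
    (hX : ∀ t : ℕ, 1 ≤ t → t ≤ n + 1 → IsZero ((l.leftDerived t).obj X)) :
    IsPartialNTilting (l.obj X) n ↔
      IsPartialNTilting X n ∧
        ∀ j : ℕ, 1 ≤ j → j ≤ n →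
          Subsingleton (Abelian.Ext X (e.obj (kernel (adj.counit.app (i.obj X)))) j) := by
  have : e.EssSurj := ⟨fun Y ↦ ⟨i.obj Y, ⟨η.app Y⟩⟩⟩
  have hExt (j : ℕ) (hj : 1 ≤ j) (hjn : j ≤ n) :
      Subsingleton (Ext (l.obj X) (l.obj X) j) ↔ Subsingleton (Ext X X j) ∧
        Subsingleton (Ext X (e.obj (kernel (adj.counit.app (i.obj X)))) j) := by
    obtain ⟨m, rfl⟩ := Nat.exists_eq_add_of_le' hj
    exact (subsingleton_ext_leftAdjoint_iff adj (fun t ht htm ↦ hX t ht (by omega)) _).trans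
      (subsingleton_ext_obj_leftAdjoint_iff adj (η.app X) X (m + 1))
  rw [isPartialNTilting_iff, isPartialNTilting_iff, hasProjDimLE_leftAdjoint_iff adj hX, and_assoc]
  simp only [← forall_and]
  exact and_congr_right fun _ ↦ forall₃_congr hExt

/-- Let `(B, A, i, e, l)` be a cleft extension of abelian categories and `X` an
object of `B` such that `(L_t l)(X) ≅ 0` for all `1 ≤ t ≤ n + 1`. Setting
`F(X) := e(ker(μ_{i(X)}))` where `μ` is the counit of `(l, e)`, the object `l(X)` is partial
`n`-tilting in `A` if and only if `X` is partial `n`-tilting in `B` and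
`Ext^j_B(X, F(X)) = 0` for all `1 ≤ j ≤ n`. -/
theorem stmt10 {A : Type u₁} {B : Type u₂} [Category.{v} A] [Category.{v} B]
    [Abelian A] [Abelian B] [EnoughProjectives A] [EnoughProjectives B]
    (i : B ⥤ A) (e : A ⥤ B) (l : B ⥤ A) [e.Faithful]
    [PreservesFiniteLimits e] [PreservesFiniteColimits e] [l.Additive]
    (adj : l ⊣ e) (η : i ⋙ e ≅ 𝟭 B)
    (X : B) (n : ℕ)
    (hX : ∀ t : ℕ, 1 ≤ t → t ≤ n + 1 → IsZero ((l.leftDerived t).obj X)) :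
    IsPartialNTilting (l.obj X) n ↔
      IsPartialNTilting X n ∧
        ∀ j : ℕ, 1 ≤ j → j ≤ n →
          Subsingleton (Abelian.Ext X (e.obj (kernel (adj.counit.app (i.obj X)))) j) :=
  stmt10_general i e l adj η X n hX
end

section
/- Let (B, A, i, e, l) be a cleft extension of abelian categories. Then every object A of A admits a projective resolution of the form ⋯ → l(P₁) → l(P₀) → A → 0, where each P_j is a projective object of B. -/
open CategoryTheory Limits

universe v u₁ u₂

/-!
Since `e` is faithful, every counit `l (e X) ⟶ X` is an epimorphism. As `l` preserves epimorphisms,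
an epimorphism `P ⟶ e X` with `P` projective in `B` is therefore adjoint to an epimorphism
`l P ⟶ X`, and covering the successive kernels in this way builds the resolution.
-/

section Exactness

variable {C : Type*} [Category* C] [HasZeroMorphisms C] {X Y Z : C} {f : X ⟶ Y} {g : Y ⟶ Z}
  {w : f ≫ g = 0}

lemma exact_epi_comp (hfg : (ShortComplex.mk f g w).Exact) {W : C} (q : W ⟶ X) [Epi q] :
    (ShortComplex.mk (q ≫ f) g (by rw [Category.assoc, w, comp_zero])).Exact := by
  let φ : ShortComplex.mk (q ≫ f) g (by rw [Category.assoc, w, comp_zero]) ⟶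
      ShortComplex.mk f g w :=
    { τ₁ := q, τ₂ := 𝟙 Y, τ₃ := 𝟙 Z }
  have : Epi φ.τ₁ := ‹Epi q›
  have : IsIso φ.τ₂ := inferInstanceAs (IsIso (𝟙 Y))
  have : Mono φ.τ₃ := inferInstanceAs (Mono (𝟙 Z))
  exact (ShortComplex.exact_iff_of_epi_of_isIso_of_mono φ).2 hfg

lemma exact_comp_mono (hfg : (ShortComplex.mk f g w).Exact) {W : C} (m : Z ⟶ W) [Mono m] :
    (ShortComplex.mk f (g ≫ m) (by rw [reassoc_of% w, zero_comp])).Exact := by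
  let φ : ShortComplex.mk f g w ⟶
      ShortComplex.mk f (g ≫ m) (by rw [reassoc_of% w, zero_comp]) :=
    { τ₁ := 𝟙 X, τ₂ := 𝟙 Y, τ₃ := m }
  have : Epi φ.τ₁ := inferInstanceAs (Epi (𝟙 X))
  have : IsIso φ.τ₂ := inferInstanceAs (IsIso (𝟙 Y))
  have : Mono φ.τ₃ := ‹Mono m›
  exact (ShortComplex.exact_iff_of_epi_of_isIso_of_mono φ).1 hfg

end Exactness

section Syzygies

variable {C : Type*} [Category* C] {F : C → C} (p : ∀ Y, F Y ⟶ Y) (X : C)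

section HasZeroMorphisms

variable [HasZeroMorphisms C] [HasKernels C]

/-- The `n`-th syzygy of `X` with respect to a chosen family of maps `p Y : F Y ⟶ Y`: the kernel of
`p` is taken `n` times, starting from `X`. It is meant for families of epimorphisms, and `F` is not
required to be functorial, so that it can come from a choice of projective presentations. -/
noncomputable def iteratedSyzygy : ℕ → C
  | 0 => X
  | n + 1 => kernel (p (iteratedSyzygy n))

/-- The inclusion of the `(n + 1)`-st syzygy in the object covering the `n`-th one. -/
noncomputable def syzygyInclusion (n : ℕ) :
    iteratedSyzygy p X (n + 1) ⟶ F (iteratedSyzygy p X n) :=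
  kernel.ι (p (iteratedSyzygy p X n))

instance mono_syzygyInclusion (n : ℕ) : Mono (syzygyInclusion p X n) :=
  inferInstanceAs (Mono (kernel.ι (p (iteratedSyzygy p X n))))

lemma syzygyInclusion_comp_cover (n : ℕ) :
    syzygyInclusion p X n ≫ p (iteratedSyzygy p X n) = 0 :=
  kernel.condition (p (iteratedSyzygy p X n))

/-- The differential of the resolution of `X` whose `n`-th term is `F (iteratedSyzygy p X n)`: the
cover of the next syzygy followed by its inclusion in the current term. -/
noncomputable def syzygyDifferential (n : ℕ) :
    F (iteratedSyzygy p X (n + 1)) ⟶ F (iteratedSyzygy p X n) :=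
  p (iteratedSyzygy p X (n + 1)) ≫ syzygyInclusion p X n

lemma syzygyDifferential_comp_cover (n : ℕ) :
    syzygyDifferential p X n ≫ p (iteratedSyzygy p X n) = 0 := by
  rw [syzygyDifferential, Category.assoc, syzygyInclusion_comp_cover, comp_zero]

lemma syzygyDifferential_comp_syzygyDifferential (n : ℕ) :
    syzygyDifferential p X (n + 1) ≫ syzygyDifferential p X n = 0 := by
  rw [syzygyDifferential.eq_def p X n, ← Category.assoc, syzygyDifferential_comp_cover, zero_comp]

end HasZeroMorphisms

variable [Preadditive C] [HasKernels C] [CategoryWithHomology C]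

lemma exact_syzygyInclusion_cover (n : ℕ) :
    (ShortComplex.mk _ _ (syzygyInclusion_comp_cover p X n)).Exact :=
  ShortComplex.exact_of_f_is_kernel _ (kernelIsKernel (p (iteratedSyzygy p X n)))

variable [∀ Y, Epi (p Y)]

lemma exact_syzygyDifferential_cover (n : ℕ) :
    (ShortComplex.mk _ _ (syzygyDifferential_comp_cover p X n)).Exact :=
  exact_epi_comp (exact_syzygyInclusion_cover p X n) (p (iteratedSyzygy p X (n + 1)))

lemma exact_syzygyDifferential_syzygyDifferential (n : ℕ) :
    (ShortComplex.mk _ _ (syzygyDifferential_comp_syzygyDifferential p X n)).Exact :=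
  exact_comp_mono (exact_syzygyDifferential_cover p X (n + 1)) (syzygyInclusion p X n)

end Syzygies

section Adjunction

variable {A B : Type*} [Category* A] [Category* B] {l : B ⥤ A} {e : A ⥤ B} (adj : l ⊣ e)

lemma epi_homEquiv_symm_of_faithful [e.Faithful] {X : B} {Y : A} (f : X ⟶ e.obj Y) [Epi f] :
    Epi ((adj.homEquiv X Y).symm f) := by
  have := Functor.preservesEpimorphisms_of_adjunction adj
  rw [Adjunction.homEquiv_counit]
  infer_instance

/-- The map `l P ⟶ Y` adjoint to the epimorphism `P ⟶ e Y` from the projective object `P` of `B`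
chosen by `Projective.over`; it is the covering of `Y` used to resolve objects of `A`. -/
noncomputable def adjointCover [EnoughProjectives B] (Y : A) :
    l.obj (Projective.over (e.obj Y)) ⟶ Y :=
  (adj.homEquiv _ Y).symm (Projective.π (e.obj Y))

instance epi_adjointCover [EnoughProjectives B] [e.Faithful] (Y : A) : Epi (adjointCover adj Y) :=
  epi_homEquiv_symm_of_faithful adj (Projective.π (e.obj Y))

end Adjunction

theorem stmt13_general {A B : Type*} [Category* A] [Category* B]
    [Preadditive A] [HasKernels A] [CategoryWithHomology A] [EnoughProjectives B]
    {e : A ⥤ B} {l : B ⥤ A} [e.Faithful] [e.PreservesEpimorphisms] (adj : l ⊣ e) (Ao : A) :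
    ∃ (P : ℕ → B) (_ : ∀ n, Projective (P n))
      (d : ∀ n : ℕ, l.obj (P (n + 1)) ⟶ l.obj (P n)) (π : l.obj (P 0) ⟶ Ao),
      (∀ n, Projective (l.obj (P n))) ∧ Epi π ∧
      ∃ (w₀ : d 0 ≫ π = 0) (w : ∀ n, d (n + 1) ≫ d n = 0),
        (ShortComplex.mk (d 0) π w₀).Exact ∧
        ∀ n, (ShortComplex.mk (d (n + 1)) (d n) (w n)).Exact :=
  let p := adjointCover adj
  ⟨fun n => Projective.over (e.obj (iteratedSyzygy p Ao n)), fun _ => inferInstance,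
    syzygyDifferential p Ao, p Ao,
    fun _ => adj.map_projective _ inferInstance, epi_adjointCover adj Ao,
    syzygyDifferential_comp_cover p Ao 0, syzygyDifferential_comp_syzygyDifferential p Ao,
    exact_syzygyDifferential_cover p Ao 0, exact_syzygyDifferential_syzygyDifferential p Ao⟩

/-- Let `(B, A, i, e, l)` be a cleft extension of abelian categories. Then
every object `Ao` of `A` admits a projective resolution of the form
`⋯ ⟶ l(P₁) ⟶ l(P₀) ⟶ Ao ⟶ 0` with each `Pⱼ` a projective object of `B`. -/
theorem stmt13 {A : Type u₁} {B : Type u₂} [Category.{v} A] [Category.{v} B]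
    [Abelian A] [Abelian B] [EnoughProjectives A] [EnoughProjectives B]
    (i : B ⥤ A) (e : A ⥤ B) (l : B ⥤ A) [e.Faithful]
    [PreservesFiniteLimits e] [PreservesFiniteColimits e]
    (adj : l ⊣ e) (η : i ⋙ e ≅ 𝟭 B) (Ao : A) :
    ∃ (P : ℕ → B) (_ : ∀ n, Projective (P n))
      (d : ∀ n : ℕ, l.obj (P (n + 1)) ⟶ l.obj (P n)) (π : l.obj (P 0) ⟶ Ao),
      (∀ n, Projective (l.obj (P n))) ∧ Epi π ∧
      ∃ (w₀ : d 0 ≫ π = 0) (w : ∀ n, d (n + 1) ≫ d n = 0),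
        (ShortComplex.mk (d 0) π w₀).Exact ∧
        ∀ n, (ShortComplex.mk (d (n + 1)) (d n) (w n)).Exact :=
  stmt13_general adj Ao
end

section
/- Let (B, A, i, e, l) be a cleft extension of abelian categories in which A and B have enough injectives and arbitrary products, and suppose e has a right adjoint functor r. Let 0 → B → E⁰ →ξ E¹ be an injective copresentation of B in B. Then r(B) is a cosilting object of A with respect to r(ξ) if and only if B is a cosilting object of B with respect to ξ and F'(B) ∈ Cogen(B), where F'(B) := e(coker(ν_{i(B)})) and ν : Id_A → r ∘ e is the unit of the adjoint pair (e, r). -/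
open CategoryTheory Limits

universe v u₁ u₂

/-- For a morphism `ξ : X ⟶ Y` in a category `C`, `CClass ξ` is the class of objects `L`
such that `Hom_C(L, ξ) : Hom_C(L, X) → Hom_C(L, Y)` is surjective. -/
def CClass {C : Type u₁} [Category.{v} C] {X Y : C} (ξ : X ⟶ Y) (L : C) : Prop :=
  Function.Surjective (fun g : L ⟶ X => g ≫ ξ)

/-- `Cogen X` is the class of subobjects of products of copies of `X`. -/
def Cogen {C : Type u₁} [Category.{v} C] [HasProducts.{v} C] (X L : C) : Prop :=
  ∃ (I : Type v) (m : L ⟶ ∏ᶜ fun _ : I => X), Mono m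

/-- Given a morphism `ξ` occurring in an injective copresentation `0 ⟶ X ⟶ E⁰ ⟶ E¹`, the
object `X` is cosilting with respect to `ξ` if `Cogen X = C_ξ`. -/
def IsCosilting {C : Type u₁} [Category.{v} C] [HasProducts.{v} C]
    {E₀ E₁ : C} (ξ : E₀ ⟶ E₁) (X : C) : Prop :=
  ∀ L : C, Cogen X L ↔ CClass ξ L

/-!
Write `F' = e (coker ν_{i B})`. Transposing along `e ⊣ r` gives `L ∈ C_{r ξ}` iff `e L ∈ C_ξ`, and,
as `e` is faithful, `e L ∈ Cogen B` implies `L ∈ Cogen (r B)`. The converse implication holds for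
`L = i M`, and it holds for all `L` once `e (r B) ∈ Cogen B`, because `e` sends `Cogen (r B)` into
`Cogen (e (r B))`. Hence `r B` is cosilting iff `B` is cosilting and `e (r B) ∈ Cogen B`. By the
triangle identity the counit splits `e ν`, so `e (r B) ≅ e (r (e (i B))) ≅ B ⊞ F'`, and the last
condition says that `F' ∈ Cogen B`.
-/

section Cogen

variable {C : Type u₁} [Category.{v} C] [HasProducts.{v} C] {X Y L M : C}

theorem cogen_iff_hom_ext :
    Cogen X L ↔ ∀ ⦃Z : C⦄ (f g : Z ⟶ L), (∀ h : L ⟶ X, f ≫ h = g ≫ h) → f = g := by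
  constructor
  · rintro ⟨I, m, _⟩ Z f g hfg
    rw [← cancel_mono m]
    refine Pi.hom_ext _ _ fun j => ?_
    simpa only [Category.assoc] using hfg (m ≫ Pi.π _ j)
  · intro hext
    refine ⟨L ⟶ X, Pi.lift fun h => h, ⟨fun f g hfg => hext f g fun h => ?_⟩⟩
    simpa using hfg =≫ Pi.π _ h

theorem Cogen.refl (X : C) : Cogen X X :=
  cogen_iff_hom_ext.2 fun _ f g hfg => by simpa using hfg (𝟙 X)

theorem Cogen.trans (hY : Cogen X Y) (hL : Cogen Y L) : Cogen X L := by
  rw [cogen_iff_hom_ext] at *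
  exact fun Z f g hfg => hL f g fun h => hY _ _ fun k => by
    simpa only [Category.assoc] using hfg (h ≫ k)

theorem Cogen.of_mono (hM : Cogen X M) (j : L ⟶ M) [Mono j] : Cogen X L := by
  obtain ⟨I, m, _⟩ := hM
  exact ⟨I, j ≫ m, inferInstance⟩

theorem cogen_congr_iso (a : L ≅ M) : Cogen X L ↔ Cogen X M :=
  ⟨fun h => h.of_mono a.inv, fun h => h.of_mono a.hom⟩

theorem cogen_iff_of_splitting [Preadditive C] {S : ShortComplex C} (σ : S.Splitting) :
    Cogen X S.X₂ ↔ Cogen X S.X₁ ∧ Cogen X S.X₃ := by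
  constructor
  · intro h
    have : Mono S.f := σ.mono_f
    have : Mono σ.s := mono_of_mono_fac σ.s_g
    exact ⟨h.of_mono S.f, h.of_mono σ.s⟩
  · simp only [cogen_iff_hom_ext]
    rintro ⟨h₁, h₃⟩ Z f g hfg
    have hr : f ≫ σ.r = g ≫ σ.r :=
      h₁ _ _ fun h => by simpa only [Category.assoc] using hfg (σ.r ≫ h)
    have hg : f ≫ S.g = g ≫ S.g :=
      h₃ _ _ fun h => by simpa only [Category.assoc] using hfg (S.g ≫ h)
    rw [← Category.comp_id f, ← Category.comp_id g, ← σ.id]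
    simp only [Preadditive.comp_add, reassoc_of% hr, reassoc_of% hg]

end Cogen

section CClass

variable {C : Type u₁} [Category.{v} C] {X Y L M : C} {ξ : X ⟶ Y}

theorem CClass.of_iso (hL : CClass ξ L) (a : L ≅ M) : CClass ξ M := by
  intro g
  obtain ⟨k, hk : k ≫ ξ = a.hom ≫ g⟩ := hL (a.hom ≫ g)
  exact ⟨a.inv ≫ k, by simp [hk]⟩

theorem cclass_congr_iso (a : L ≅ M) : CClass ξ L ↔ CClass ξ M :=
  ⟨fun h => h.of_iso a, fun h => h.of_iso a.symm⟩

end CClass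

section Adjunction

variable {A : Type u₁} {B : Type u₂} [Category.{v} A] [Category.{v} B]
  {e : A ⥤ B} {r : B ⥤ A}

theorem cclass_map_iff (adjr : e ⊣ r) {X Y : B} (ξ : X ⟶ Y) (L : A) :
    CClass (r.map ξ) L ↔ CClass ξ (e.obj L) := by
  have transpose_comp : (fun g : L ⟶ r.obj X => g ≫ r.map ξ) ∘ adjr.homEquiv L X =
      adjr.homEquiv L Y ∘ fun g => g ≫ ξ :=
    funext fun g => (adjr.homEquiv_naturality_right g ξ).symm
  rw [CClass, CClass, ← (adjr.homEquiv L X).surjective_comp, transpose_comp,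
    (adjr.homEquiv L Y).comp_surjective]

variable [HasProducts.{v} A] [HasProducts.{v} B]

theorem Cogen.map {X L : A} (h : Cogen X L) (e : A ⥤ B) [e.PreservesMonomorphisms]
    [∀ I : Type v, PreservesLimitsOfShape (Discrete I) e] : Cogen (e.obj X) (e.obj L) := by
  obtain ⟨I, m, _⟩ := h
  exact ⟨I, e.map m ≫ (PreservesProduct.iso e _).hom, inferInstance⟩

theorem Cogen.of_obj_leftAdjoint [e.Faithful] (adjr : e ⊣ r) {X : B} {L : A}
    (h : Cogen X (e.obj L)) : Cogen (r.obj X) L := by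
  rw [cogen_iff_hom_ext] at *
  refine fun Z f g hfg => e.map_injective (h _ _ fun k => (adjr.homEquiv Z X).injective ?_)
  simpa only [adjr.homEquiv_naturality_left] using hfg (adjr.homEquiv L X k)

theorem cogen_obj_section_iff [e.Faithful] (adjr : e ⊣ r) {i : B ⥤ A} (η : i ⋙ e ≅ 𝟭 B)
    {X M : B} : Cogen (r.obj X) (i.obj M) ↔ Cogen X M := by
  refine ⟨fun h => ?_, fun h => .of_obj_leftAdjoint adjr ((cogen_congr_iso (η.app M)).2 h)⟩
  rw [cogen_iff_hom_ext] at h ⊢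
  intro Z f g hfg
  have map_comp_eq (k : e.obj (i.obj M) ⟶ X) : e.map (i.map f) ≫ k = e.map (i.map g) ≫ k := by
    rw [← cancel_epi (η.inv.app Z)]
    calc
      η.inv.app Z ≫ e.map (i.map f) ≫ k = f ≫ η.inv.app M ≫ k :=
        (η.inv.naturality_assoc f k).symm
      _ = g ≫ η.inv.app M ≫ k := hfg _
      _ = η.inv.app Z ≫ e.map (i.map g) ≫ k := η.inv.naturality_assoc g k
  have map_eq : i.map f = i.map g :=
    h _ _ fun k => (adjr.homEquiv (i.obj Z) X).symm.injective <| by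
      simp only [adjr.homEquiv_naturality_left_symm, map_comp_eq]
  have : (i ⋙ e).Faithful := Functor.Faithful.of_iso η.symm
  exact (i ⋙ e).map_injective (congrArg e.map map_eq)

theorem isCosilting_map_iff [e.Faithful] [e.PreservesMonomorphisms]
    [∀ I : Type v, PreservesLimitsOfShape (Discrete I) e] (adjr : e ⊣ r) {i : B ⥤ A}
    (η : i ⋙ e ≅ 𝟭 B) {X E₀ E₁ : B} (ξ : E₀ ⟶ E₁) :
    IsCosilting (r.map ξ) (r.obj X) ↔ IsCosilting ξ X ∧ Cogen X (e.obj (r.obj X)) := by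
  constructor
  · intro hr
    have hX : IsCosilting ξ X := fun M => by
      rw [← cogen_obj_section_iff adjr η, hr, cclass_map_iff adjr]
      exact cclass_congr_iso (η.app M)
    refine ⟨hX, (hX _).2 ?_⟩
    rw [← cclass_map_iff adjr, ← hr]
    exact .refl _
  · rintro ⟨hX, her⟩ L
    rw [cclass_map_iff adjr, ← hX]
    exact ⟨fun h => her.trans (h.map e), .of_obj_leftAdjoint adjr⟩

end Adjunction

section Abelian

variable {A : Type u₁} {B : Type u₂} [Category.{v} A] [Category.{v} B] [Abelian A] [Abelian B]
  {e : A ⥤ B} {r : B ⥤ A}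

/-- The image under a left adjoint `e` of the right exact sequence `Y ⟶ r (e Y) ⟶ coker ν_Y ⟶ 0`
given by the unit `ν`, split by the counit. -/
noncomputable def mapUnitCokernelSplitting [e.PreservesZeroMorphisms] (adjr : e ⊣ r) (Y : A) :
    ((ShortComplex.mk (adjr.unit.app Y) (cokernel.π (adjr.unit.app Y))
      (cokernel.condition _)).map e).Splitting :=
  have := adjr.leftAdjoint_preservesColimits
  .ofExactOfRetraction _
    ((ShortComplex.exact_cokernel (adjr.unit.app Y)).map_of_epi_of_preservesCokernel e
      (inferInstanceAs (Epi (cokernel.π _))) inferInstance)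
    (adjr.counit.app (e.obj Y)) (adjr.left_triangle_components Y)
    (inferInstanceAs (Epi (e.map (cokernel.π _))))

theorem stmt17_general [HasProducts.{v} A] [HasProducts.{v} B] [e.Faithful]
    [e.PreservesMonomorphisms] [∀ I : Type v, PreservesLimitsOfShape (Discrete I) e]
    (adjr : e ⊣ r) {i : B ⥤ A} (η : i ⋙ e ≅ 𝟭 B) {X E₀ E₁ : B} (ξ : E₀ ⟶ E₁) :
    IsCosilting (r.map ξ) (r.obj X) ↔
      IsCosilting ξ X ∧ Cogen X (e.obj (cokernel (adjr.unit.app (i.obj X)))) := by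
  have := adjr.isLeftAdjoint
  have cogen_section : Cogen X (e.obj (i.obj X)) := (cogen_congr_iso (η.app X)).2 (.refl X)
  have cogen_er_iff : Cogen X (e.obj (r.obj X)) ↔
      Cogen X (e.obj (cokernel (adjr.unit.app (i.obj X)))) :=
    calc
      _ ↔ Cogen X (e.obj (r.obj (e.obj (i.obj X)))) :=
        cogen_congr_iso ((r ⋙ e).mapIso (η.app X).symm)
      _ ↔ Cogen X (e.obj (i.obj X)) ∧ Cogen X (e.obj (cokernel (adjr.unit.app (i.obj X)))) :=
        cogen_iff_of_splitting (mapUnitCokernelSplitting adjr (i.obj X))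
      _ ↔ _ := and_iff_right cogen_section
  rw [isCosilting_map_iff adjr η, cogen_er_iff]

end Abelian

/-- Let `(B, A, i, e, l)` be a cleft extension of abelian categories with
enough injectives and arbitrary products, and suppose `e` has a right adjoint functor `r`. Let
`0 ⟶ Bo ⟶ι E⁰ ⟶ξ E¹` be an injective copresentation of `Bo` in `B`. Then `r(Bo)` is cosilting
in `A` with respect to `r(ξ)` if and only if `Bo` is cosilting in `B` with respect to `ξ` and
`F'(Bo) ∈ Cogen(Bo)`, where `F'(Bo) := e(coker(ν_{i(Bo)}))` and `ν : 𝟭 A ⟶ e ⋙ r` is the unit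
of the adjoint pair `(e, r)`. -/
theorem stmt17 {A : Type u₁} {B : Type u₂} [Category.{v} A] [Category.{v} B]
    [Abelian A] [Abelian B] [EnoughProjectives A] [EnoughProjectives B]
    [EnoughInjectives A] [EnoughInjectives B]
    [HasProducts.{v} A] [HasProducts.{v} B]
    (i : B ⥤ A) (e : A ⥤ B) (l : B ⥤ A) [e.Faithful]
    [PreservesFiniteLimits e] [PreservesFiniteColimits e]
    (adj : l ⊣ e) (η : i ⋙ e ≅ 𝟭 B)
    (r : B ⥤ A) (adjr : e ⊣ r)
    {Bo E₀ E₁ : B} (ι : Bo ⟶ E₀) (ξ : E₀ ⟶ E₁)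
    (hE₀ : Injective E₀) (hE₁ : Injective E₁) [Mono ι]
    (w : ι ≫ ξ = 0) (hexact : (ShortComplex.mk ι ξ w).Exact) :
    IsCosilting (r.map ξ) (r.obj Bo) ↔
      IsCosilting ξ Bo ∧ Cogen Bo (e.obj (cokernel (adjr.unit.app (i.obj Bo)))) := by
  have : PreservesLimits e := adj.rightAdjoint_preservesLimits
  exact stmt17_general adjr η ξ
end
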